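/- Let W be a Coxeter group whose Coxeter diagram is the star with center v₀, leaves a and b, and a path v₀—v₁—⋯—v_{n−1}—v_n where the last edge {v_{n−1},v_n} has weight 4 and all other edges have weight 3 (the affine B-type diagram). Then for every k ≥ 1 the word w_k = (a b v₀ v₁ ⋯ v_{n−1} v_n v_{n−1} ⋯ v₁ v₀)^k is a reduced word of a fully commutative element, and the maximum antichain size of its heap is n(w_k) = 2. -/

import Mathlib

open CoxeterSystem

def CommStep {B : Type*} (M : CoxeterMatrix B) (l l' : List B) : Prop :=
  ∃ (u v : List B) (a b : B), M a b = 2 ∧ l = u ++ a :: b :: v ∧ l' = u ++ b :: a :: v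

def CommEquiv {B : Type*} (M : CoxeterMatrix B) : List B → List B → Prop :=
  Relation.ReflTransGen fun l l' => CommStep M l l' ∨ CommStep M l' l

def FullyCommutative {B W : Type*} [Group W] {M : CoxeterMatrix B}
    (cs : CoxeterSystem M W) (w : W) : Prop :=
  ∀ l l', cs.IsReduced l → cs.wordProd l = w → cs.IsReduced l' → cs.wordProd l' = w →
    CommEquiv M l l'

def heapLe {B : Type*} (M : CoxeterMatrix B) (ω : List B) :
    Fin ω.length → Fin ω.length → Prop :=
  Relation.ReflTransGen fun i j => (i : ℕ) < (j : ℕ) ∧ M (ω.get i) (ω.get j) ≠ 2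

def IsHeapAntichain {B : Type*} (M : CoxeterMatrix B) (ω : List B)
    (A : Finset (Fin ω.length)) : Prop :=
  ∀ i ∈ A, ∀ j ∈ A, i ≠ j → ¬ heapLe M ω i j

noncomputable def heapN {B : Type*} (M : CoxeterMatrix B) (ω : List B) : ℕ :=
  sSup {n | ∃ A : Finset (Fin ω.length), IsHeapAntichain M ω A ∧ A.card = n}

/-!
The geometric representation shows that a product of two simple reflections has order exactly
`M i j`, and the action of `W` on `W × ℤ/2` by signed conjugation yields the exchange property.
Together they show that an element with right descents `i` and `j` has a reduced word ending in the
braid word of `i` and `j`. Hence (Stembridge) a word whose commutation class contains neither a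
square nor a braid word of length at least three as a factor is reduced and represents a fully
commutative element.

For two adjacent vertices of the diagram, the relation between the numbers of their occurrences in
the prefixes of a word does not change under commutations. For a power of
`a b v₀ ⋯ vₙ ⋯ v₀` these relations exclude squares and long braid words, often because the two edges
at a vertex force opposite parities. The heap is covered by two chains, the letters `b` and all
other letters, and the first two letters `a` and `b` are incomparable.
-/

section ReflectionPairs

open Module Real

variable {V : Type*} [AddCommGroup V] [Module ℝ V] {x y : V} {f g : Dual ℝ V} {θ : ℝ}

theorem sin_smul_reflection_mul_reflection_pow_apply (hf : f x = 2) (hg : g y = 2)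
    (hfy : f y = -2 * cos θ) (hgx : g x = -2 * cos θ) (k : ℕ) :
    sin θ • ((reflection hf * reflection hg) ^ k) x =
      sin ((2 * k + 1) * θ) • x + sin (2 * k * θ) • y := by
  have sin_add_self (α : ℝ) : sin (α + θ) = 2 * cos θ * sin α - sin (α - θ) := by
    rw [sin_add, sin_sub]
    ring
  induction k with
  | zero => simp
  | succ k ih =>
    have hy : sin (2 * (k + 1 : ℕ) * θ) =
        2 * cos θ * sin ((2 * k + 1) * θ) - sin (2 * k * θ) := by
      convert sin_add_self ((2 * k + 1) * θ) using 2 <;> push_cast <;> ring_nf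
    have hx : sin ((2 * (k + 1 : ℕ) + 1) * θ) =
        2 * cos θ * sin (2 * (k + 1 : ℕ) * θ) - sin ((2 * k + 1) * θ) := by
      convert sin_add_self (2 * (k + 1 : ℕ) * θ) using 2 <;> push_cast <;> ring_nf
    rw [pow_succ', LinearEquiv.mul_apply, ← map_smul, ih, LinearEquiv.mul_apply, hx, hy]
    simp only [map_add, map_smul, reflection_apply, map_sub, hf, hg, hfy, hgx]
    module

theorem reflection_mul_reflection_pow_apply_eq_self (hf : f x = 2) (hg : g y = 2)
    (hfy : f y = -2 * cos θ) (hgx : g x = -2 * cos θ) (hθ : sin θ ≠ 0) {m : ℕ}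
    (hm : m * θ = π) : ((reflection hf * reflection hg) ^ m) x = x := by
  refine smul_right_injective V hθ ?_
  dsimp only
  rw [sin_smul_reflection_mul_reflection_pow_apply hf hg hfy hgx,
    show (2 * m + 1) * θ = θ + 2 * π by linear_combination 2 * hm,
    show 2 * m * θ = 2 * π by linear_combination 2 * hm, sin_add_two_pi, sin_two_pi, zero_smul,
    add_zero]

theorem exists_eq_smul_add_smul_add_of_sin_ne_zero (hf : f x = 2) (hg : g y = 2)
    (hfy : f y = -2 * cos θ) (hgx : g x = -2 * cos θ) (hθ : sin θ ≠ 0) (z : V) :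
    ∃ (c d : ℝ) (z₀ : V), f z₀ = 0 ∧ g z₀ = 0 ∧ z = c • x + d • y + z₀ := by
  let c := (f z + cos θ * g z) / (2 * sin θ ^ 2)
  let d := (g z + cos θ * f z) / (2 * sin θ ^ 2)
  have hsq := sin_sq_add_cos_sq θ
  refine ⟨c, d, z - c • x - d • y, ?_, ?_, by abel⟩ <;>
  · simp only [map_sub, map_smul, smul_eq_mul, hf, hg, hfy, hgx, c, d]
    field_simp
    grind

theorem reflection_mul_reflection_pow_eq_one (hf : f x = 2) (hg : g y = 2)
    (hfy : f y = -2 * cos θ) (hgx : g x = -2 * cos θ) (hθ : sin θ ≠ 0) {m : ℕ}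
    (hm : m * θ = π) : (reflection hf * reflection hg) ^ m = 1 := by
  set T := (reflection hf * reflection hg) ^ m with hT
  have hTx : T x = x := reflection_mul_reflection_pow_apply_eq_self hf hg hfy hgx hθ hm
  have hTy : T y = y := by
    have hinv : T⁻¹ = (reflection hg * reflection hf) ^ m := by
      rw [hT, ← inv_pow, mul_inv_rev, reflection_inv, reflection_inv]
    have hfix : T⁻¹ y = y := by
      rw [hinv]
      exact reflection_mul_reflection_pow_apply_eq_self hg hf hgx hfy hθ hm
    exact (LinearEquiv.eq_symm_apply T).1 hfix.symm
  ext z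
  obtain ⟨c, d, z₀, hfz, hgz, rfl⟩ :=
    exists_eq_smul_add_smul_add_of_sin_ne_zero hf hg hfy hgx hθ z
  have hTz : T z₀ = z₀ := by
    rw [hT, LinearEquiv.pow_apply]
    refine Function.IsFixedPt.iterate (?_ : _ = _) m
    rw [LinearEquiv.mul_apply, reflection_apply, reflection_apply, hgz, zero_smul, sub_zero, hfz,
      zero_smul, sub_zero]
  simp only [map_add, map_smul, hTx, hTy, hTz, LinearEquiv.coe_one, id_eq]

end ReflectionPairs

section GeometricRepresentation

open Module

variable {B : Type*} (M : CoxeterMatrix B)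

/-- The linear form `2 B(eᵢ, ·)`, where `B(eᵢ, eⱼ) = -cos (π / M i j)` is the bilinear form of the
geometric representation. Since `π / 0 = 0`, an entry `M i j = 0`, which encodes an infinite order,
yields the customary value `-1`. -/
noncomputable def geomForm (i : B) : Dual ℝ (B →₀ ℝ) :=
  Finsupp.linearCombination ℝ fun j => -2 * Real.cos (Real.pi / M i j)

theorem geomForm_single (i j : B) :
    geomForm M i (Finsupp.single j 1) = -2 * Real.cos (Real.pi / M i j) := by
  simp [geomForm]

theorem geomForm_single_self (i : B) : geomForm M i (Finsupp.single i 1) = 2 := by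
  simp [geomForm_single]

theorem geomForm_single_comm (i j : B) :
    geomForm M j (Finsupp.single i 1) = -2 * Real.cos (Real.pi / M i j) := by
  rw [geomForm_single, M.symmetric]

/-- The action of a simple reflection in the geometric representation. -/
noncomputable def geomReflection (i : B) : (B →₀ ℝ) ≃ₗ[ℝ] (B →₀ ℝ) :=
  reflection (geomForm_single_self M i)

theorem sin_pi_div_pos {m : ℕ} (hm : 2 ≤ m) : 0 < Real.sin (Real.pi / m) := by
  have hm' : (1 : ℝ) < m := by exact_mod_cast hm
  exact Real.sin_pos_of_pos_of_lt_pi (by positivity) (div_lt_self Real.pi_pos hm')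

theorem isLiftable_geomReflection : M.IsLiftable (geomReflection M) := by
  intro i j
  rcases eq_or_ne i j with rfl | hij
  · rw [M.diagonal, pow_one]
    exact mul_eq_one_iff_eq_inv.2 (reflection_inv _).symm
  rcases eq_or_ne (M i j) 0 with h0 | h0
  · rw [h0, pow_zero]
  have hm : 2 ≤ M i j := by
    have := M.off_diagonal i j hij
    omega
  exact reflection_mul_reflection_pow_eq_one _ _ (geomForm_single M i j)
    (geomForm_single_comm M i j) (sin_pi_div_pos hm).ne' (by field_simp)

variable {M}

theorem eq_zero_of_geomReflection_mul_geomReflection_pow_eq_one {i j : B} {k : ℕ} (hij : i ≠ j)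
    (h0 : M i j = 0) (h : (geomReflection M i * geomReflection M j) ^ k = 1) : k = 0 := by
  have hpow := reflection_mul_reflection_pow_apply_self (geomForm_single_self M i)
    (geomForm_single_self M j) k 2
    (by rw [geomForm_single, geomForm_single, M.symmetric j i, h0]; norm_num)
  change ((geomReflection M i * geomReflection M j) ^ k) _ = _ at hpow
  simpa [h, geomForm_single_comm, h0, hij] using DFunLike.congr_fun hpow j

theorem dvd_of_geomReflection_mul_geomReflection_pow_eq_one {i j : B} {k : ℕ}
    (h : (geomReflection M i * geomReflection M j) ^ k = 1) : M i j ∣ k := by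
  rcases eq_or_ne i j with rfl | hij
  · simp
  rcases eq_or_ne (M i j) 0 with h0 | h0
  · rw [eq_zero_of_geomReflection_mul_geomReflection_pow_eq_one hij h0 h]
    exact dvd_zero _
  set θ := Real.pi / M i j with hθ
  have hsin : Real.sin θ ≠ 0 := by
    have := M.off_diagonal i j hij
    exact (sin_pi_div_pos (by omega)).ne'
  have hpow := sin_smul_reflection_mul_reflection_pow_apply (geomForm_single_self M i)
    (geomForm_single_self M j) (geomForm_single M i j) (geomForm_single_comm M i j) k
  change _ • ((geomReflection M i * geomReflection M j) ^ k) _ = _ at hpow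
  have hi : Real.sin θ = Real.sin ((2 * k + 1) * θ) := by
    simpa [h, hij.symm, hij] using DFunLike.congr_fun hpow i
  have hj : Real.sin (2 * k * θ) = 0 := by
    simpa [h, hij.symm, hij, eq_comm] using DFunLike.congr_fun hpow j
  have hcos : Real.cos (2 * k * θ) = 1 := by
    rw [add_mul, one_mul, Real.sin_add, hj, zero_mul, zero_add] at hi
    exact mul_right_cancel₀ hsin (hi.symm.trans (one_mul _).symm)
  obtain ⟨r, hr⟩ := (Real.cos_eq_one_iff _).1 hcos
  have hk : (k : ℝ) = M i j * r := by
    rw [hθ] at hr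
    field_simp at hr
    linarith
  exact Int.natCast_dvd_natCast.1 ⟨r, by exact_mod_cast hk⟩

end GeometricRepresentation

section Exchange

variable {B W : Type*} [Group W] {M : CoxeterMatrix B} (cs : CoxeterSystem M W)

theorem orderOf_simple_mul_simple (i j : B) :
    orderOf (cs.simple i * cs.simple j) = M i j := by
  refine Nat.dvd_antisymm (orderOf_dvd_of_pow_eq_one (cs.simple_mul_simple_pow i j)) ?_
  apply dvd_of_geomReflection_mul_geomReflection_pow_eq_one
  have hpow := congrArg (cs.lift ⟨_, isLiftable_geomReflection M⟩)
    (pow_orderOf_eq_one (cs.simple i * cs.simple j))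
  simpa only [map_pow, map_mul, map_one, lift_apply_simple] using hpow

theorem prod_map_alternatingWord {G : Type*} [Monoid G] (f : B → G) (i j : B) (m : ℕ) :
    ((alternatingWord i j (2 * m)).map f).prod = (f i * f j) ^ m := by
  induction m with
  | zero => simp [alternatingWord]
  | succ m ih =>
    rw [mul_add_one, alternatingWord_succ', alternatingWord_succ', if_neg (by simp),
      if_pos (by simp), List.map_cons, List.map_cons, List.prod_cons, List.prod_cons, ih, pow_succ',
      mul_assoc]

theorem rightInvSeq_alternatingWord (i j : B) (p : ℕ) :
    cs.rightInvSeq (alternatingWord i j p) =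
      ((List.range p).map fun k => (cs.simple j * cs.simple i) ^ k * cs.simple j).reverse := by
  induction p generalizing i j with
  | zero => simp [alternatingWord]
  | succ p ih =>
    rw [alternatingWord_succ, rightInvSeq_concat, ih, List.range_succ_eq_map, List.map_cons,
      List.reverse_cons, List.map_reverse, List.map_map, List.map_map, pow_zero, one_mul,
      List.concat_eq_append]
    congr 3
    funext k
    simp only [Function.comp_apply, MulAut.conj_apply, inv_simple]
    rw [← mul_assoc, mul_pow_mul, pow_succ, mul_assoc, mul_assoc]

open Classical in
theorem even_count_rightInvSeq_alternatingWord (i j : B) (t : W) :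
    Even ((cs.rightInvSeq (alternatingWord i j (2 * M i j))).count t) := by
  rw [rightInvSeq_alternatingWord, List.count_reverse, two_mul, List.range_add, List.map_append,
    List.map_map, List.count_append]
  simp only [Function.comp_def, pow_add, simple_mul_simple_pow', one_mul]
  exact ⟨_, rfl⟩

open Classical in
/-- The action of a simple reflection on `W × ℤ/2` that underlies the exchange property:
conjugation on the first factor, with a sign change exactly at the simple reflection itself. -/
noncomputable def signedConj (i : B) : Function.End (W × ZMod 2) := fun p =>
  (cs.simple i * p.1 * cs.simple i, p.2 + if p.1 = cs.simple i then 1 else 0)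

open Classical in
theorem prod_map_signedConj_apply (ω : List B) (p : W × ZMod 2) :
    (ω.map (signedConj cs)).prod p =
      (cs.wordProd ω * p.1 * (cs.wordProd ω)⁻¹, p.2 + ((cs.rightInvSeq ω).count p.1 : ℕ)) := by
  induction ω with
  | nil => simp [Function.End.one_def]
  | cons i ω ih =>
    rw [List.map_cons, List.prod_cons]
    change signedConj cs i ((ω.map (signedConj cs)).prod p) = _
    rw [ih, signedConj]
    ext
    · simp [wordProd_cons, mul_assoc]
    · have hi : cs.wordProd ω * p.1 * (cs.wordProd ω)⁻¹ = cs.simple i ↔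
          (cs.wordProd ω)⁻¹ * cs.simple i * cs.wordProd ω = p.1 := by
        rw [mul_inv_eq_iff_eq_mul, mul_assoc, inv_mul_eq_iff_eq_mul, eq_comm]
      simp only [rightInvSeq, List.count_cons, beq_iff_eq, hi]
      split_ifs <;> push_cast <;> ring

theorem isLiftable_signedConj : M.IsLiftable (signedConj cs) := by
  classical
  intro i j
  rw [← prod_map_alternatingWord]
  funext p
  have hprod : cs.wordProd (alternatingWord i j (2 * M i j)) = 1 := by
    rw [wordProd, prod_map_alternatingWord, simple_mul_simple_pow]
  rw [prod_map_signedConj_apply, hprod,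
    (ZMod.natCast_eq_zero_iff_even).2 (even_count_rightInvSeq_alternatingWord cs i j p.1)]
  simp [Function.End.one_def]

open Classical in
theorem natCast_count_rightInvSeq_eq_of_wordProd_eq {ω ω' : List B}
    (h : cs.wordProd ω = cs.wordProd ω') (t : W) :
    ((cs.rightInvSeq ω).count t : ZMod 2) = (cs.rightInvSeq ω').count t := by
  have hlift (ω : List B) : (ω.map (signedConj cs)).prod =
      cs.lift ⟨_, isLiftable_signedConj cs⟩ (cs.wordProd ω) := by
    simp only [wordProd, map_list_prod, List.map_map, Function.comp_def, lift_apply_simple]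
  have happ := congrFun ((hlift ω).trans ((congrArg _ h).trans (hlift ω').symm)) (t, 0)
  rw [prod_map_signedConj_apply, prod_map_signedConj_apply] at happ
  simpa using congrArg Prod.snd happ

variable {cs}

theorem simple_mem_map_conj_rightInvSeq_iff {ω : List B} {i : B} :
    cs.simple i ∈ (cs.rightInvSeq ω).map (MulAut.conj (cs.simple i)) ↔
      cs.simple i ∈ cs.rightInvSeq ω := by
  have hmap := List.mem_map_of_injective (MulAut.conj (cs.simple i)).injective
    (a := cs.simple i) (l := cs.rightInvSeq ω)
  rwa [MulAut.conj_apply, mul_inv_cancel_right] at hmap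

theorem simple_mem_rightInvSeq {ω : List B} {i : B} (h : cs.IsRightDescent (cs.wordProd ω) i) :
    cs.simple i ∈ cs.rightInvSeq ω := by
  classical
  obtain ⟨ω', hω', hprod⟩ := cs.exists_isReduced (cs.wordProd ω * cs.simple i)
  have hω : cs.wordProd ω = cs.wordProd (ω'.concat i) := by
    rw [wordProd_concat, ← hprod, simple_mul_simple_cancel_right]
  have hnot : cs.simple i ∉ cs.rightInvSeq ω' := by
    intro hmem
    have hlt := (cs.isRightInversion_of_mem_rightInvSeq hω' hmem).2
    rw [← hprod, simple_mul_simple_cancel_right] at hlt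
    exact lt_asymm h hlt
  have hcount := natCast_count_rightInvSeq_eq_of_wordProd_eq cs hω (cs.simple i)
  rw [rightInvSeq_concat, List.concat_eq_append, List.count_append,
    List.count_eq_zero_of_not_mem (simple_mem_map_conj_rightInvSeq_iff.not.2 hnot)] at hcount
  by_contra hmem
  rw [List.count_eq_zero_of_not_mem hmem] at hcount
  simp at hcount

theorem exists_wordProd_mul_simple_eq_wordProd_eraseIdx {ω : List B} {i : B}
    (h : cs.IsRightDescent (cs.wordProd ω) i) :
    ∃ t < ω.length, cs.wordProd ω * cs.simple i = cs.wordProd (ω.eraseIdx t) := by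
  obtain ⟨t, ht, hi⟩ := List.mem_iff_getElem.1 (simple_mem_rightInvSeq h)
  refine ⟨t, by simpa using ht, ?_⟩
  rw [← cs.wordProd_mul_getD_rightInvSeq, List.getD_eq_getElem _ _ ht, hi]

theorem isReduced_of_nodup_rightInvSeq {ω : List B} (h : (cs.rightInvSeq ω).Nodup) :
    cs.IsReduced ω := by
  induction ω using List.reverseRecOn with
  | nil => simp [CoxeterSystem.IsReduced]
  | append_singleton ω i ih =>
    rw [← List.concat_eq_append, rightInvSeq_concat, List.nodup_concat,
      simple_mem_map_conj_rightInvSeq_iff] at h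
    have hω : cs.IsReduced ω := ih (List.Nodup.of_map _ h.2)
    have hasc := (cs.not_isRightDescent_iff).1 (mt simple_mem_rightInvSeq h.1)
    rw [CoxeterSystem.IsReduced, ← List.concat_eq_append, wordProd_concat, hasc, hω,
      List.length_concat]

theorem isReduced_alternatingWord {i j : B} {p : ℕ} (hp : M i j ≠ 0 → p ≤ M i j) :
    cs.IsReduced (alternatingWord i j p) := by
  apply isReduced_of_nodup_rightInvSeq
  rw [rightInvSeq_alternatingWord, List.nodup_reverse]
  refine List.Nodup.map_on (fun k hk l hl hkl => ?_) List.nodup_range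
  have hmod := pow_inj_mod.1 (mul_right_cancel hkl)
  rw [orderOf_simple_mul_simple, M.symmetric] at hmod
  rw [List.mem_range] at hk hl
  rcases eq_or_ne (M i j) 0 with h0 | h0
  · simpa only [h0, Nat.mod_zero] using hmod
  · have := hp h0
    rwa [Nat.mod_eq_of_lt (by omega), Nat.mod_eq_of_lt (by omega)] at hmod

theorem isReduced_of_isReduced_append {l r : List B} (h : cs.IsReduced (l ++ r)) :
    cs.IsReduced l := by
  simpa using h.take l.length

theorem exists_isReduced_append_alternatingWord {w : W} {i j : B} (hi : cs.IsRightDescent w i)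
    (hj : cs.IsRightDescent w j) {p : ℕ} (hp : cs.IsReduced (alternatingWord i j p)) :
    ∃ u, cs.IsReduced (u ++ alternatingWord i j p) ∧
      cs.wordProd (u ++ alternatingWord i j p) = w := by
  induction p generalizing i j with
  | zero =>
    obtain ⟨u, hu, rfl⟩ := cs.exists_isReduced w
    exact ⟨u, by simpa [alternatingWord] using hu, by simp [alternatingWord]⟩
  | succ p ih =>
    obtain ⟨u, hu, rfl⟩ := ih hj hi
      (isReduced_of_isReduced_append (by rwa [alternatingWord_succ, List.concat_eq_append] at hp))
    obtain ⟨t, ht, hexch⟩ := exists_wordProd_mul_simple_eq_wordProd_eraseIdx hj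
    rcases lt_or_ge t u.length with htu | htu
    · rw [List.eraseIdx_append_of_lt_length htu] at hexch
      have hprod : cs.wordProd (u.eraseIdx t ++ alternatingWord i j (p + 1)) =
          cs.wordProd (u ++ alternatingWord j i p) := by
        rw [alternatingWord_succ, List.concat_eq_append, ← List.append_assoc,
          wordProd_append _ (_ ++ _), ← hexch, wordProd_singleton, simple_mul_simple_cancel_right]
      refine ⟨u.eraseIdx t, ?_, hprod⟩
      rw [CoxeterSystem.IsReduced, hprod, hu]
      simp only [List.length_append, length_alternatingWord, List.length_eraseIdx_of_lt htu]
      omega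
    · -- The exchanged letter would lie in the alternating word, which would then not be reduced.
      rw [List.eraseIdx_append_of_length_le htu, wordProd_append, wordProd_append, mul_assoc,
        mul_right_inj, ← wordProd_concat, ← alternatingWord_succ] at hexch
      have hlen := cs.length_wordProd_le ((alternatingWord j i p).eraseIdx (t - u.length))
      rw [List.length_append, length_alternatingWord] at ht
      rw [← hexch, hp, List.length_eraseIdx_of_lt (by rw [length_alternatingWord]; omega),
        length_alternatingWord, length_alternatingWord] at hlen
      omega

theorem ne_zero_of_isRightDescent {w : W} {i j : B} (hi : cs.IsRightDescent w i)
    (hj : cs.IsRightDescent w j) : M i j ≠ 0 := by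
  intro h0
  obtain ⟨u, hu, hw⟩ := exists_isReduced_append_alternatingWord hi hj
    (isReduced_alternatingWord (p := cs.length w + 1) fun h => absurd h0 h)
  rw [CoxeterSystem.IsReduced, hw, List.length_append, length_alternatingWord] at hu
  omega

theorem exists_isReduced_append_braidWord {w : W} {i j : B} (hi : cs.IsRightDescent w i)
    (hj : cs.IsRightDescent w j) :
    ∃ u, cs.IsReduced (u ++ braidWord M i j) ∧ cs.wordProd (u ++ braidWord M i j) = w :=
  exists_isReduced_append_alternatingWord hi hj (isReduced_alternatingWord fun _ => le_rfl)

theorem isRightDescent_wordProd_concat {l : List B} {i : B} (h : cs.IsReduced (l ++ [i])) :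
    cs.IsRightDescent (cs.wordProd (l ++ [i])) i := by
  rw [IsRightDescent, h, wordProd_append, wordProd_singleton, simple_mul_simple_cancel_right,
    List.length_append, List.length_singleton, Nat.lt_succ_iff]
  exact cs.length_wordProd_le l

end Exchange

section CommutationClasses

variable {B W : Type*} [Group W] {M : CoxeterMatrix B} {l l' l'' : List B}

theorem CommStep.symm (h : CommStep M l l') : CommStep M l' l := by
  obtain ⟨u, v, a, b, hab, rfl, rfl⟩ := h
  exact ⟨u, v, b, a, by rwa [M.symmetric], rfl, rfl⟩

theorem CommStep.commEquiv (h : CommStep M l l') : CommEquiv M l l' :=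
  .single (.inl h)

theorem CommEquiv.symm (h : CommEquiv M l l') : CommEquiv M l' l := by
  induction h with
  | refl => exact .refl
  | tail _ h ih => exact .head h.symm ih

theorem CommEquiv.trans (h : CommEquiv M l l') (h' : CommEquiv M l' l'') : CommEquiv M l l'' :=
  Relation.ReflTransGen.trans h h'

theorem CommEquiv.append_right (h : CommEquiv M l l') (r : List B) :
    CommEquiv M (l ++ r) (l' ++ r) := by
  have step (l l') : CommStep M l l' → CommStep M (l ++ r) (l' ++ r) := by
    rintro ⟨u, v, a, b, hab, rfl, rfl⟩
    exact ⟨u, v ++ r, a, b, hab, by simp, by simp⟩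
  exact h.lift (· ++ r) fun _ _ h => h.imp (step _ _) (step _ _)

theorem CommEquiv.of_forall_commStep {C : List B → Prop}
    (hC : ∀ l l', CommStep M l l' → C l → C l') (h : CommEquiv M l l') (hl : C l) : C l' := by
  induction h with
  | refl => exact hl
  | tail _ h ih => exact hC _ _ (h.elim id CommStep.symm) ih

theorem CommEquiv.perm (h : CommEquiv M l l') : l.Perm l' := by
  refine h.of_forall_commStep (C := (l.Perm ·)) ?_ (.refl l)
  rintro _ _ ⟨u, v, a, b, -, rfl, rfl⟩ hl
  exact hl.trans ((List.Perm.swap b a v).append_left u)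

variable {cs : CoxeterSystem M W}

theorem simple_mul_simple_comm {i j : B} (h : M i j = 2) :
    cs.simple i * cs.simple j = cs.simple j * cs.simple i := by
  have hpow := cs.simple_mul_simple_pow i j
  rw [h, sq] at hpow
  rw [eq_inv_of_mul_eq_one_left hpow, mul_inv_rev, inv_simple, inv_simple]

theorem CommEquiv.wordProd_eq (h : CommEquiv M l l') : cs.wordProd l = cs.wordProd l' := by
  refine h.of_forall_commStep (C := fun r => cs.wordProd l = cs.wordProd r) ?_ rfl
  rintro _ _ ⟨u, v, a, b, hab, rfl, rfl⟩ hl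
  rw [hl, wordProd_append, wordProd_append, wordProd_cons, wordProd_cons, wordProd_cons,
    wordProd_cons, ← mul_assoc (cs.simple a), simple_mul_simple_comm hab, mul_assoc]

theorem CommEquiv.isReduced (h : CommEquiv M l l') (hl : cs.IsReduced l) : cs.IsReduced l' := by
  rw [CoxeterSystem.IsReduced, ← h.wordProd_eq, hl, h.perm.length_eq]

end CommutationClasses

/-- The hypothesis of Stembridge's criterion: no word in the commutation class of `l` contains a
square or a braid word of length at least three as a factor. -/
structure IsBraidAvoiding {B : Type*} (M : CoxeterMatrix B) (l : List B) : Prop where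
  not_square_infix : ∀ r, CommEquiv M l r → ∀ i, ¬ [i, i] <:+: r
  not_braidWord_infix : ∀ r, CommEquiv M l r → ∀ i j, 3 ≤ M i j → ¬ braidWord M i j <:+: r

namespace IsBraidAvoiding

variable {B W : Type*} [Group W] {M : CoxeterMatrix B} {cs : CoxeterSystem M W} {l l' : List B}

theorem of_append {r : List B} (h : IsBraidAvoiding M (l ++ r)) : IsBraidAvoiding M l where
  not_square_infix _ hl i hi :=
    h.not_square_infix _ (hl.append_right r) i (List.infix_append_of_infix_left hi)
  not_braidWord_infix _ hl i j hM hij :=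
    h.not_braidWord_infix _ (hl.append_right r) i j hM (List.infix_append_of_infix_left hij)

theorem of_commEquiv (h : IsBraidAvoiding M l) (hl : CommEquiv M l l') : IsBraidAvoiding M l' where
  not_square_infix r hr := h.not_square_infix r (hl.trans hr)
  not_braidWord_infix r hr := h.not_braidWord_infix r (hl.trans hr)

theorem commEquiv_append_of_forall {r : List B} (h : cs.wordProd (l ++ r) = cs.wordProd (l' ++ r))
    (hred' : cs.IsReduced (l' ++ r))
    (hl : ∀ l', cs.IsReduced l' → cs.wordProd l = cs.wordProd l' → CommEquiv M l l') :
    CommEquiv M (l ++ r) (l' ++ r) := by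
  rw [wordProd_append, wordProd_append, mul_left_inj] at h
  exact (hl l' (isReduced_of_isReduced_append hred') h).append_right r

theorem exists_commEquiv_append_pair {s t : B} (h : IsBraidAvoiding M (l ++ [s]))
    (hred : cs.IsReduced (l ++ [s])) (hst : s ≠ t)
    (ht : cs.IsRightDescent (cs.wordProd (l ++ [s])) t)
    (hl : ∀ l', cs.IsReduced l' → cs.wordProd l = cs.wordProd l' → CommEquiv M l l') :
    ∃ u, M t s = 2 ∧ CommEquiv M (l ++ [s]) (u ++ [t, s]) := by
  have hs := isRightDescent_wordProd_concat hred
  obtain ⟨u, hu, hprod⟩ := exists_isReduced_append_braidWord ht hs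
  obtain ⟨m, hm⟩ := Nat.exists_eq_succ_of_ne_zero (ne_zero_of_isRightDescent ht hs)
  have hsplit : u ++ braidWord M t s = u ++ alternatingWord s t m ++ [s] := by
    rw [braidWord, hm, alternatingWord_succ, List.concat_eq_append, List.append_assoc]
  have hequiv : CommEquiv M (l ++ [s]) (u ++ braidWord M t s) := by
    rw [hsplit] at hu hprod ⊢
    exact commEquiv_append_of_forall hprod.symm hu hl
  have hM : M t s = 2 := by
    have hne := M.off_diagonal t s hst.symm
    have hlt := mt (h.not_braidWord_infix _ hequiv t s)
      (not_not.2 (List.infix_append_of_infix_right (List.infix_refl _)))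
    omega
  rw [braidWord, hM] at hequiv
  exact ⟨u, hM, hequiv⟩

theorem commEquiv (hl : IsBraidAvoiding M l) (hred : cs.IsReduced l) (hred' : cs.IsReduced l')
    (h : cs.wordProd l = cs.wordProd l') : CommEquiv M l l' := by
  have hlen : l.length = l'.length := by rw [← hred, ← hred', h]
  induction hN : l.length generalizing l l' with
  | zero =>
    rw [List.eq_nil_of_length_eq_zero hN, List.eq_nil_of_length_eq_zero (hlen.symm.trans hN)]
    exact .refl
  | succ N ih =>
    have ih {l : List B} (hl : IsBraidAvoiding M l) (hred : cs.IsReduced l) (hN : l.length = N) :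
        ∀ l', cs.IsReduced l' → cs.wordProd l = cs.wordProd l' → CommEquiv M l l' :=
      fun l' hred' h => ih hl hred hred' h (by rw [← hred, ← hred', h]) hN
    obtain ⟨l₁, s, rfl⟩ := l.eq_nil_or_concat'.resolve_left (by rintro rfl; simp at hN)
    obtain ⟨l₂, t, rfl⟩ := l'.eq_nil_or_concat'.resolve_left (by rintro rfl; simp at hlen)
    have ih₁ := ih hl.of_append (isReduced_of_isReduced_append hred) (by simpa using hN)
    rcases eq_or_ne s t with rfl | hst
    · exact commEquiv_append_of_forall h hred' ih₁
    have ht : cs.IsRightDescent (cs.wordProd (l₁ ++ [s])) t :=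
      h ▸ isRightDescent_wordProd_concat hred'
    obtain ⟨u, hM, hts⟩ := hl.exists_commEquiv_append_pair hred hst ht ih₁
    have hst : CommEquiv M (l₁ ++ [s]) (u ++ [s] ++ [t]) := by
      rw [List.append_assoc]
      exact hts.trans (CommStep.commEquiv ⟨u, [], t, s, hM, rfl, rfl⟩)
    have huN : (u ++ [s]).length = N := by simpa [hN] using hst.perm.length_eq.symm
    exact hst.trans (commEquiv_append_of_forall (hst.wordProd_eq.symm.trans h) hred'
      (ih (hl.of_commEquiv hst).of_append (isReduced_of_isReduced_append (hst.isReduced hred))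
        huN))

theorem isReduced (hl : IsBraidAvoiding M l) : cs.IsReduced l := by
  induction l using List.reverseRecOn with
  | nil => simp [CoxeterSystem.IsReduced]
  | append_singleton l s ih =>
    have hred := ih hl.of_append
    by_cases hs : cs.IsRightDescent (cs.wordProd l) s
    · exfalso
      obtain ⟨l', hred', hprod⟩ := exists_isReduced_append_alternatingWord hs hs (p := 1)
        (isReduced_alternatingWord fun _ => by simp)
      have hequiv := (hl.of_append.commEquiv hred hred' hprod.symm).append_right [s]
      refine hl.not_square_infix _ hequiv s ?_
      rw [List.append_assoc]
      exact List.infix_append_of_infix_right (List.infix_refl _)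
    · rw [cs.not_isRightDescent_iff] at hs
      rw [CoxeterSystem.IsReduced, wordProd_append, wordProd_singleton, hs, hred,
        List.length_append, List.length_singleton]

theorem fullyCommutative (hl : IsBraidAvoiding M l) : FullyCommutative cs (cs.wordProd l) :=
  fun _ _ h₁ hw₁ h₂ hw₂ =>
    (hl.commEquiv hl.isReduced h₁ hw₁.symm).symm.trans (hl.commEquiv hl.isReduced h₂ hw₂.symm)

end IsBraidAvoiding

section PrefixCounts

variable {B : Type*} {M : CoxeterMatrix B} {P : ℕ → ℕ → Prop} {x y : B} {l l' r s : List B}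

theorem CommEquiv.filter_eq {p : B → Bool} (hp : ∀ i j, p i → p j → M i j ≠ 2)
    (h : CommEquiv M l l') : l.filter p = l'.filter p := by
  refine h.of_forall_commStep (C := fun r => l.filter p = r.filter p) ?_ rfl
  rintro _ _ ⟨u, v, a, b, hab, rfl, rfl⟩ hl
  have := hp a b
  grind

variable [DecidableEq B]

/-- Every prefix of `l` satisfies the relation `P` between its numbers of letters `x` and `y`.
For non-commuting `x` and `y` this is invariant under commutations, which makes it a certificate
against factors of words in a commutation class. -/
def PrefixCount (P : ℕ → ℕ → Prop) (x y : B) (l : List B) : Prop :=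
  ∀ r, r <+: l → P (r.count x) (r.count y)

namespace PrefixCount

theorem of_prefix (h : PrefixCount P x y l) (hr : r <+: l) : PrefixCount P x y r :=
  fun _ hs => h _ (hs.trans hr)

theorem apply_append (h : PrefixCount P x y (l ++ r)) (hs : s <+: r) :
    P (l.count x + s.count x) (l.count y + s.count y) := by
  simpa only [List.count_append] using h (l ++ s) ((List.prefix_append_right_inj l).2 hs)

theorem filter_iff :
    PrefixCount P x y (l.filter fun z => z = x ∨ z = y) ↔ PrefixCount P x y l := by
  simp only [PrefixCount, List.prefix_filter_iff, forall_exists_index, and_imp]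
  constructor
  · intro h r hr
    simpa [List.count_filter] using h _ r hr rfl
  · rintro h _ r hr rfl
    simpa [List.count_filter] using h r hr

theorem of_commEquiv (hxy : M x y ≠ 2) (hl : CommEquiv M l l') (h : PrefixCount P x y l) :
    PrefixCount P x y l' := by
  rw [← filter_iff] at h ⊢
  rwa [← hl.filter_eq]
  have hyx : M y x ≠ 2 := by rwa [M.symmetric]
  intro i j hi hj
  rcases of_decide_eq_true hi with rfl | rfl <;> rcases of_decide_eq_true hj with rfl | rfl <;>
    simp [hxy, hyx]

theorem flatten_replicate (hP : ∀ c d, P c d → P (l.count x + c) (l.count y + d)) (h0 : P 0 0)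
    (h : PrefixCount P x y l) (k : ℕ) : PrefixCount P x y (List.replicate k l).flatten := by
  induction k with
  | zero => simpa [PrefixCount] using h0
  | succ k ih =>
    intro r hr
    rw [List.replicate_succ, List.flatten_cons] at hr
    rcases List.prefix_or_prefix_of_prefix hr (List.prefix_append _ _) with hr' | ⟨s, rfl⟩
    · exact h r hr'
    · rw [List.count_append, List.count_append]
      exact hP _ _ (ih s ((List.prefix_append_right_inj l).1 hr))

end PrefixCount

/-- The relation between the letter counts `c` of `x` and `d` of `y` that holds for all prefixes of
`(x y y)ᵏ`; here `x` is one of the two leaves `a`, `b` and `y` is their neighbour. -/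
def LeafCount (c d : ℕ) : Prop :=
  d ≤ 2 * c ∧ 2 * c ≤ d + 2

/-- The relation between the letter counts `c` of `x` and `d` of `y` that holds for all prefixes of
`(x y y x)ᵏ`; here `x` and `y` are consecutive inner vertices of the path. -/
def PathCount (c d : ℕ) : Prop :=
  d ≤ c + c % 2 ∧ c ≤ d + c % 2

/-- The relation between the letter counts `c` of `x` and `d` of `y` that holds for all prefixes of
`(x y x)ᵏ`; here `x` and `y` are the ends of the edge of weight 4. -/
def LastCount (c d : ℕ) : Prop :=
  2 * d ≤ c + 1 ∧ c ≤ 2 * d + 1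

namespace PrefixCount

theorem leafCount (hxy : x ≠ y) (k : ℕ) :
    PrefixCount LeafCount x y (List.replicate k [x, y, y]).flatten := by
  refine flatten_replicate (fun c d => ?_) (by simp [LeafCount]) ?_ k
  · grind [LeafCount]
  · simp [PrefixCount, LeafCount, ← List.mem_inits, hxy, hxy.symm]

theorem pathCount (hxy : x ≠ y) (k : ℕ) :
    PrefixCount PathCount x y (List.replicate k [x, y, y, x]).flatten := by
  refine flatten_replicate (fun c d => ?_) (by simp [PathCount]) ?_ k
  · grind [PathCount]
  · simp [PrefixCount, PathCount, ← List.mem_inits, hxy, hxy.symm]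

theorem lastCount (hxy : x ≠ y) (k : ℕ) :
    PrefixCount LastCount x y (List.replicate k [x, y, x]).flatten := by
  refine flatten_replicate (fun c d => ?_) (by simp [LastCount]) ?_ k
  · grind [LastCount]
  · simp [PrefixCount, LastCount, ← List.mem_inits, hxy, hxy.symm]

theorem not_leafCount_fst_fst (hxy : x ≠ y) : ¬ PrefixCount LeafCount x y (l ++ [x, x]) := by
  intro h
  have h₀ := h.apply_append (s := []) (by simp)
  have h₂ := h.apply_append (s := [x, x]) (by simp)
  grind [LeafCount]

theorem even_count_of_leafCount (hr : r.count x = 0) (hr' : r.count y = 2)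
    (h : PrefixCount LeafCount x y (l ++ r)) : Even (l.count y) := by
  have h₀ := h.apply_append (List.nil_prefix)
  have h₂ := h.apply_append (List.prefix_refl r)
  simp only [LeafCount, hr, hr', List.count_nil] at h₀ h₂
  grind

theorem not_leafCount_fst_snd_fst (hxy : x ≠ y) : ¬ PrefixCount LeafCount x y (l ++ [x, y, x]) := by
  intro h
  have h₀ := h.apply_append (s := []) (by simp)
  have h₃ := h.apply_append (s := [x, y, x]) (by simp)
  grind [LeafCount]

theorem odd_count_of_leafCount_snd_fst_snd (hxy : x ≠ y)
    (h : PrefixCount LeafCount x y (l ++ [y, x, y])) : Odd (l.count y) := by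
  have h₁ := h.apply_append (s := [y]) (by simp)
  have h₂ := h.apply_append (s := [y, x]) (by simp)
  grind [LeafCount]

theorem even_count_of_pathCount_snd_snd (hxy : x ≠ y)
    (h : PrefixCount PathCount x y (l ++ [y, y])) : Even (l.count y) := by
  have h₀ := h.apply_append (s := []) (by simp)
  have h₂ := h.apply_append (s := [y, y]) (by simp)
  grind [PathCount]

theorem odd_count_of_pathCount_fst_fst (hxy : x ≠ y)
    (h : PrefixCount PathCount x y (l ++ [x, x])) : Odd (l.count x) := by
  have h₀ := h.apply_append (s := []) (by simp)
  have h₂ := h.apply_append (s := [x, x]) (by simp)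
  grind [PathCount]

theorem not_pathCount_fst_snd_fst (hxy : x ≠ y) : ¬ PrefixCount PathCount x y (l ++ [x, y, x]) := by
  intro h
  have h₀ := h.apply_append (s := []) (by simp)
  have h₁ := h.apply_append (s := [x]) (by simp)
  have h₂ := h.apply_append (s := [x, y]) (by simp)
  have h₃ := h.apply_append (s := [x, y, x]) (by simp)
  grind [PathCount]

theorem not_pathCount_snd_fst_snd (hxy : x ≠ y) : ¬ PrefixCount PathCount x y (l ++ [y, x, y]) := by
  intro h
  have h₀ := h.apply_append (s := []) (by simp)
  have h₁ := h.apply_append (s := [y]) (by simp)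
  have h₂ := h.apply_append (s := [y, x]) (by simp)
  have h₃ := h.apply_append (s := [y, x, y]) (by simp)
  grind [PathCount]

theorem not_lastCount_snd_snd (hxy : x ≠ y) : ¬ PrefixCount LastCount x y (l ++ [y, y]) := by
  intro h
  have h₀ := h.apply_append (s := []) (by simp)
  have h₂ := h.apply_append (s := [y, y]) (by simp)
  grind [LastCount]

theorem odd_count_of_lastCount_fst_fst (hxy : x ≠ y)
    (h : PrefixCount LastCount x y (l ++ [x, x])) : Odd (l.count x) := by
  have h₀ := h.apply_append (s := []) (by simp)
  have h₂ := h.apply_append (s := [x, x]) (by simp)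
  grind [LastCount]

theorem not_lastCount_fst_snd_fst_snd (hxy : x ≠ y) :
    ¬ PrefixCount LastCount x y (l ++ [x, y, x, y]) := by
  intro h
  have h₁ := h.apply_append (s := [x]) (by simp)
  have h₄ := h.apply_append (s := [x, y, x, y]) (by simp)
  grind [LastCount]

theorem not_lastCount_snd_fst_snd_fst (hxy : x ≠ y) :
    ¬ PrefixCount LastCount x y (l ++ [y, x, y, x]) := by
  intro h
  have h₀ := h.apply_append (s := []) (by simp)
  have h₃ := h.apply_append (s := [y, x, y]) (by simp)
  grind [LastCount]

end PrefixCount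

end PrefixCounts

/-- The affine diagram of type `B` with leaves `a` and `b` attached to `v 0` and path
`v 0, …, v n`, whose last edge has weight 4; it may be part of a larger Coxeter diagram. -/
structure IsAffineBDiagram {B : Type*} (M : CoxeterMatrix B) (n : ℕ) (a b : B) (v : ℕ → B) :
    Prop where
  one_le : 1 ≤ n
  injOn : Set.InjOn v (Set.Iic n)
  ne : a ≠ b
  left_ne : ∀ i ≤ n, a ≠ v i
  right_ne : ∀ i ≤ n, b ≠ v i
  left_edge : M a (v 0) = 3
  right_edge : M b (v 0) = 3
  path_edge : ∀ i, i + 2 ≤ n → M (v i) (v (i + 1)) = 3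
  last_edge : M (v (n - 1)) (v n) = 4
  leaves_comm : M a b = 2
  left_comm : ∀ i, 1 ≤ i → i ≤ n → M a (v i) = 2
  right_comm : ∀ i, 1 ≤ i → i ≤ n → M b (v i) = 2
  path_comm : ∀ i j, i + 2 ≤ j → j ≤ n → M (v i) (v j) = 2

namespace IsAffineBDiagram

variable {B : Type*} {M : CoxeterMatrix B} {n i : ℕ} {a b x y : B} {v : ℕ → B}

theorem swap (h : IsAffineBDiagram M n a b v) : IsAffineBDiagram M n b a v where
  __ := h
  ne := h.ne.symm
  left_ne := h.right_ne
  right_ne := h.left_ne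
  left_edge := h.right_edge
  right_edge := h.left_edge
  leaves_comm := M.symmetric a b ▸ h.leaves_comm
  left_comm := h.right_comm
  right_comm := h.left_comm

theorem path_inj {j : ℕ} (h : IsAffineBDiagram M n a b v) (hi : i ≤ n) (hj : j ≤ n) :
    v i = v j ↔ i = j :=
  h.injOn.eq_iff (Set.mem_Iic.2 hi) (Set.mem_Iic.2 hj)

theorem path_ne (h : IsAffineBDiagram M n a b v) (hi : i + 1 ≤ n) : v i ≠ v (i + 1) :=
  mt (h.path_inj (by omega) hi).1 (by omega)

theorem last_ne (h : IsAffineBDiagram M n a b v) : v (n - 1) ≠ v n :=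
  mt (h.path_inj (by omega) le_rfl).1 (by have := h.one_le; omega)

theorem path_step (h : IsAffineBDiagram M n a b v) (hi : i + 1 ≤ n) :
    3 ≤ M (v i) (v (i + 1)) := by
  rcases Nat.lt_or_ge n (i + 2) with hn | hn
  · obtain rfl : n = i + 1 := by omega
    have := h.last_edge
    rw [Nat.add_sub_cancel] at this
    omega
  · exact (h.path_edge i hn).ge

/-- The vertices of the affine diagram. -/
def IsVertex (n : ℕ) (a b : B) (v : ℕ → B) (x : B) : Prop :=
  x = a ∨ x = b ∨ ∃ i ≤ n, x = v i

theorem edge_of_leaf (h : IsAffineBDiagram M n a b v) (hy : IsVertex n a b v y)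
    (hM : 3 ≤ M a y) : y = v 0 := by
  rcases hy with rfl | rfl | ⟨i, hi, rfl⟩
  · simp at hM
  · simp [h.leaves_comm] at hM
  · rcases Nat.eq_zero_or_pos i with rfl | hi'
    · rfl
    · simp [h.left_comm i hi' hi] at hM

theorem edge_of_path {i j : ℕ} (h : IsAffineBDiagram M n a b v) (hij : i ≤ j) (hj : j ≤ n)
    (hM : 3 ≤ M (v i) (v j)) : j = i + 1 := by
  rcases (by omega : j = i ∨ j = i + 1 ∨ i + 2 ≤ j) with rfl | hj' | hij'
  · simp at hM
  · exact hj'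
  · simp [h.path_comm i j hij' hj] at hM

theorem edge_cases (h : IsAffineBDiagram M n a b v) (hx : IsVertex n a b v x)
    (hy : IsVertex n a b v y) (hM : 3 ≤ M x y) :
    s(x, y) = s(a, v 0) ∨ s(x, y) = s(b, v 0) ∨
      (∃ i, i + 2 ≤ n ∧ s(x, y) = s(v i, v (i + 1))) ∨ s(x, y) = s(v (n - 1), v n) := by
  have path {i j : ℕ} (hij : i ≤ j) (hj : j ≤ n) (hM : 3 ≤ M (v i) (v j)) :
      (∃ k, k + 2 ≤ n ∧ s(v i, v j) = s(v k, v (k + 1))) ∨ s(v i, v j) = s(v (n - 1), v n) := by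
    obtain rfl := h.edge_of_path hij hj hM
    rcases Nat.lt_or_ge n (i + 2) with hn | hn
    · obtain rfl : n = i + 1 := by omega
      exact .inr rfl
    · exact .inl ⟨i, hn, rfl⟩
  have hM' : 3 ≤ M y x := M.symmetric x y ▸ hM
  have hswap {z : B} : IsVertex n a b v z → IsVertex n b a v z := or_left_comm.1
  rcases id hx with rfl | rfl | ⟨i, hi, rfl⟩
  · simp [h.edge_of_leaf hy hM]
  · simp [h.swap.edge_of_leaf (hswap hy) hM]
  rcases id hy with rfl | rfl | ⟨j, hj, rfl⟩
  · simp [h.edge_of_leaf hx hM']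
  · simp [h.swap.edge_of_leaf (hswap hx) hM']
  rcases le_total i j with hij | hij
  · exact .inr (.inr (path hij hj hM))
  · rw [Sym2.eq_swap]
    exact .inr (.inr (path hij hi hM'))

end IsAffineBDiagram

/-- One period `a b v₀ v₁ ⋯ vₙ vₙ₋₁ ⋯ v₀` of the zigzag word. -/
def zigzagBlock {B : Type*} (n : ℕ) (a b : B) (v : ℕ → B) : List B :=
  a :: b :: (List.range (n + 1) ++ (List.range n).reverse).map v

/-- The words whose prefix counts along each edge of the affine diagram are those of powers of
`zigzagBlock n a b v`. Unlike these powers, they are closed under prefixes and commutations. -/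
structure IsZigzagWord {B : Type*} [DecidableEq B] (n : ℕ) (a b : B) (v : ℕ → B) (l : List B) :
    Prop where
  isVertex : ∀ x ∈ l, IsAffineBDiagram.IsVertex n a b v x
  left : PrefixCount LeafCount a (v 0) l
  right : PrefixCount LeafCount b (v 0) l
  path : ∀ i, i + 2 ≤ n → PrefixCount PathCount (v i) (v (i + 1)) l
  last : PrefixCount LastCount (v (n - 1)) (v n) l

namespace IsZigzagWord

variable {B : Type*} [DecidableEq B] {M : CoxeterMatrix B} {n i : ℕ} {a b x y : B} {v : ℕ → B}
  {l r : List B}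

theorem of_prefix (h : IsZigzagWord n a b v l) (hr : r <+: l) : IsZigzagWord n a b v r where
  isVertex x hx := h.isVertex x (hr.subset hx)
  left := h.left.of_prefix hr
  right := h.right.of_prefix hr
  path i hi := (h.path i hi).of_prefix hr
  last := h.last.of_prefix hr

theorem swap (h : IsZigzagWord n a b v l) : IsZigzagWord n b a v l where
  __ := h
  isVertex x hx := or_left_comm.1 (h.isVertex x hx)
  left := h.right
  right := h.left

theorem of_commEquiv (hM : IsAffineBDiagram M n a b v) (h : IsZigzagWord n a b v l)
    (hr : CommEquiv M l r) : IsZigzagWord n a b v r where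
  isVertex x hx := h.isVertex x (hr.perm.mem_iff.2 hx)
  left := h.left.of_commEquiv (by simp [hM.left_edge]) hr
  right := h.right.of_commEquiv (by simp [hM.right_edge]) hr
  path i hi := (h.path i hi).of_commEquiv (by simp [hM.path_edge i hi]) hr
  last := h.last.of_commEquiv (by simp [hM.last_edge]) hr

theorem even_count_of_append_pair (hM : IsAffineBDiagram M n a b v) (hi : i < n)
    (h : IsZigzagWord n a b v (l ++ [v i, v i])) : Even (l.count (v i)) := by
  cases i with
  | zero =>
    exact PrefixCount.even_count_of_leafCount (by simp [(hM.left_ne 0 (by omega)).symm])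
      (by simp) h.left
  | succ i =>
    exact PrefixCount.even_count_of_pathCount_snd_snd (hM.path_ne (by omega)) (h.path i hi)

theorem odd_count_of_append_pair (hM : IsAffineBDiagram M n a b v) (hi : i < n)
    (h : IsZigzagWord n a b v (l ++ [v i, v i])) : Odd (l.count (v i)) := by
  rcases Nat.lt_or_ge n (i + 2) with hn | hn
  · obtain rfl : i = n - 1 := by omega
    exact PrefixCount.odd_count_of_lastCount_fst_fst hM.last_ne h.last
  · exact PrefixCount.odd_count_of_pathCount_fst_fst (hM.path_ne hi) (h.path i hn)

theorem not_append_pair (hM : IsAffineBDiagram M n a b v) :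
    ¬ IsZigzagWord n a b v (l ++ [x, x]) := by
  intro h
  rcases h.isVertex x (by simp) with rfl | rfl | ⟨i, hi, rfl⟩
  · exact PrefixCount.not_leafCount_fst_fst (hM.left_ne 0 n.zero_le) h.left
  · exact PrefixCount.not_leafCount_fst_fst (hM.right_ne 0 n.zero_le) h.right
  · rcases hi.lt_or_eq with hi | rfl
    · exact Nat.not_even_iff_odd.2 (odd_count_of_append_pair hM hi h)
        (even_count_of_append_pair hM hi h)
    · exact PrefixCount.not_lastCount_snd_snd hM.last_ne h.last

/-- Between the two letters `v 0` only one leaf occurs, but the counts for the two leaves force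
opposite parities of the number of earlier letters `v 0`. -/
theorem not_append_braidWord_left (hM : IsAffineBDiagram M n a b v) (hxy : s(x, y) = s(a, v 0)) :
    ¬ IsZigzagWord n a b v (l ++ [y, x, y]) := by
  intro h
  have hav := hM.left_ne 0 n.zero_le
  have hbv := hM.right_ne 0 n.zero_le
  rcases Sym2.eq_iff.1 hxy with ⟨rfl, rfl⟩ | ⟨rfl, rfl⟩
  · refine Nat.not_even_iff_odd.2 (PrefixCount.odd_count_of_leafCount_snd_fst_snd hav h.left) ?_
    exact PrefixCount.even_count_of_leafCount (by simp [hbv.symm, hM.ne])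
      (by simp [hav]) h.right
  · exact PrefixCount.not_leafCount_fst_snd_fst hav h.left

theorem not_append_braidWord_path (hM : IsAffineBDiagram M n a b v) (hi : i + 2 ≤ n)
    (hxy : s(x, y) = s(v i, v (i + 1))) : ¬ IsZigzagWord n a b v (l ++ [y, x, y]) := by
  intro h
  have hne := hM.path_ne (by omega : i + 1 ≤ n)
  rcases Sym2.eq_iff.1 hxy with ⟨rfl, rfl⟩ | ⟨rfl, rfl⟩
  · exact PrefixCount.not_pathCount_snd_fst_snd hne (h.path i hi)
  · exact PrefixCount.not_pathCount_fst_snd_fst hne (h.path i hi)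

theorem not_append_braidWord_last (hM : IsAffineBDiagram M n a b v)
    (hxy : s(x, y) = s(v (n - 1), v n)) : ¬ IsZigzagWord n a b v (l ++ [x, y, x, y]) := by
  intro h
  rcases Sym2.eq_iff.1 hxy with ⟨rfl, rfl⟩ | ⟨rfl, rfl⟩
  · exact PrefixCount.not_lastCount_fst_snd_fst_snd hM.last_ne h.last
  · exact PrefixCount.not_lastCount_snd_fst_snd_fst hM.last_ne h.last

theorem not_append_braidWord (hM : IsAffineBDiagram M n a b v) (hxy : 3 ≤ M x y) :
    ¬ IsZigzagWord n a b v (l ++ braidWord M x y) := by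
  intro h
  have hmem : x ∈ braidWord M x y ∧ y ∈ braidWord M x y := by
    obtain ⟨m, hm⟩ := Nat.exists_eq_add_of_le' hxy
    simp [braidWord, hm, alternatingWord_succ]
  have hsymm {z w : B} (hs : s(x, y) = s(z, w)) : M x y = M z w := by
    rcases Sym2.eq_iff.1 hs with ⟨rfl, rfl⟩ | ⟨rfl, rfl⟩
    exacts [rfl, M.symmetric _ _]
  have hodd (hs : M x y = 3) : braidWord M x y = [y, x, y] := by rw [braidWord, hs]; rfl
  have heven (hs : M x y = 4) : braidWord M x y = [x, y, x, y] := by rw [braidWord, hs]; rfl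
  rcases hM.edge_cases (h.isVertex x (List.mem_append_right l hmem.1))
    (h.isVertex y (List.mem_append_right l hmem.2)) hxy with hs | hs | ⟨i, hi, hs⟩ | hs
  · exact not_append_braidWord_left hM hs (hodd ((hsymm hs).trans hM.left_edge) ▸ h)
  · exact not_append_braidWord_left hM.swap hs (hodd ((hsymm hs).trans hM.right_edge) ▸ h).swap
  · exact not_append_braidWord_path hM hi hs (hodd ((hsymm hs).trans (hM.path_edge i hi)) ▸ h)
  · exact not_append_braidWord_last hM hs (heven ((hsymm hs).trans hM.last_edge) ▸ h)

theorem isBraidAvoiding (hM : IsAffineBDiagram M n a b v) (h : IsZigzagWord n a b v l) :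
    IsBraidAvoiding M l where
  not_square_infix r hr x := by
    rintro ⟨u, w, rfl⟩
    exact not_append_pair hM ((h.of_commEquiv hM hr).of_prefix (List.prefix_append _ w))
  not_braidWord_infix r hr x y hxy := by
    rintro ⟨u, w, rfl⟩
    exact not_append_braidWord hM hxy ((h.of_commEquiv hM hr).of_prefix (List.prefix_append _ w))

end IsZigzagWord

section ZigzagBlock

variable {B : Type*} {M : CoxeterMatrix B} {n i : ℕ} {a b : B} {v : ℕ → B}

theorem zigzagBlock_eq : zigzagBlock n a b v =
    a :: b :: (List.map v (List.range (n + 1)) ++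
      List.map (fun i => v (n - 1 - i)) (List.range n)) := by
  have : (List.range n).reverse = (List.range n).map (n - 1 - ·) := by
    simp [List.range_eq_range', List.reverse_range']
  rw [zigzagBlock, List.map_append, this, List.map_map]
  rfl

theorem filter_range_eq {p : ℕ → Bool} {N : ℕ} {l : List ℕ} (hl : l.Pairwise (· < ·))
    (h : ∀ r, r ∈ l ↔ r < N ∧ p r) : (List.range N).filter p = l :=
  (List.pairwise_lt_range.filter p).eq_of_mem_iff hl fun r => by
    rw [List.mem_filter, List.mem_range, h]

theorem filter_map_zigzag {p : B → Bool} {q : ℕ → Bool} {l l' : List ℕ}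
    (hpq : ∀ m ≤ n, p (v m) = q m) (hl : (List.range (n + 1)).filter q = l)
    (hl' : (List.range n).filter q = l') :
    ((List.range (n + 1) ++ (List.range n).reverse).map v).filter p =
      (l ++ l'.reverse).map v := by
  rw [List.filter_map, List.filter_congr (q := q), List.filter_append, List.filter_reverse, hl, hl']
  simp only [List.mem_append, List.mem_range, List.mem_reverse, Function.comp_apply]
  exact fun m hm => hpq m (by omega)

variable [DecidableEq B]

theorem filter_map_zigzag_zero (hM : IsAffineBDiagram M n a b v) :
    ((List.range (n + 1) ++ (List.range n).reverse).map v).filter (fun z => z = a ∨ z = v 0) =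
      [v 0, v 0] := by
  have hn := hM.one_le
  rw [filter_map_zigzag (q := (· = 0)) (l := [0]) (l' := [0]) (fun m hm => ?_)
    (filter_range_eq (by simp) (by simp)) (filter_range_eq (by simp) (by simp; omega))]
  · rfl
  · simp [(hM.left_ne m hm).symm, hM.path_inj hm n.zero_le]

theorem filter_left_zigzagBlock (hM : IsAffineBDiagram M n a b v) :
    (zigzagBlock n a b v).filter (fun z => z = a ∨ z = v 0) = [a, v 0, v 0] := by
  rw [zigzagBlock, List.filter_cons_of_pos (by simp),
    List.filter_cons_of_neg (by simp [hM.ne.symm, hM.right_ne]), filter_map_zigzag_zero hM]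

theorem filter_right_zigzagBlock (hM : IsAffineBDiagram M n a b v) :
    (zigzagBlock n a b v).filter (fun z => z = b ∨ z = v 0) = [b, v 0, v 0] := by
  rw [zigzagBlock, List.filter_cons_of_neg (by simp [hM.ne, hM.left_ne]),
    List.filter_cons_of_pos (by simp), filter_map_zigzag_zero hM.swap]

theorem filter_path_zigzagBlock (hM : IsAffineBDiagram M n a b v) (hi : i + 2 ≤ n) :
    (zigzagBlock n a b v).filter (fun z => z = v i ∨ z = v (i + 1)) =
      [v i, v (i + 1), v (i + 1), v i] := by
  rw [zigzagBlock, List.filter_cons_of_neg (by grind [hM.left_ne]),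
    List.filter_cons_of_neg (by grind [hM.right_ne]),
    filter_map_zigzag (q := fun m => m = i ∨ m = i + 1) (l := [i, i + 1]) (l' := [i, i + 1])
      (fun m hm => ?_) (filter_range_eq (by simp) (by simp; omega))
      (filter_range_eq (by simp) (by simp; omega))]
  · rfl
  · simp only [hM.path_inj hm (by omega : i ≤ n), hM.path_inj hm (by omega : i + 1 ≤ n)]

theorem filter_last_zigzagBlock (hM : IsAffineBDiagram M n a b v) :
    (zigzagBlock n a b v).filter (fun z => z = v (n - 1) ∨ z = v n) =
      [v (n - 1), v n, v (n - 1)] := by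
  have hn := hM.one_le
  rw [zigzagBlock, List.filter_cons_of_neg (by grind [hM.left_ne]),
    List.filter_cons_of_neg (by grind [hM.right_ne]),
    filter_map_zigzag (q := fun m => m = n - 1 ∨ m = n) (l := [n - 1, n]) (l' := [n - 1])
      (fun m hm => ?_) (filter_range_eq (by simpa) (by grind))
      (filter_range_eq (by simp) (by simp; omega))]
  · rfl
  · simp only [hM.path_inj hm (n.sub_le 1), hM.path_inj hm le_rfl]

theorem filter_flatten_replicate {α : Type*} {p : α → Bool} {l l' : List α} (h : l.filter p = l')
    (k : ℕ) : (List.replicate k l).flatten.filter p = (List.replicate k l').flatten := by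
  rw [List.filter_flatten, List.map_replicate, h]

theorem isZigzagWord_flatten_replicate (hM : IsAffineBDiagram M n a b v) (k : ℕ) :
    IsZigzagWord n a b v (List.replicate k (zigzagBlock n a b v)).flatten where
  isVertex x hx := by
    obtain ⟨_, h, hx⟩ := List.mem_flatten.1 hx
    rw [List.eq_of_mem_replicate h, zigzagBlock, List.mem_cons, List.mem_cons, List.mem_map] at hx
    refine hx.imp_right (.imp_right ?_)
    rintro ⟨m, hm, rfl⟩
    rw [List.mem_append, List.mem_reverse, List.mem_range, List.mem_range] at hm
    exact ⟨m, by omega, rfl⟩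
  left := by
    rw [← PrefixCount.filter_iff, filter_flatten_replicate (filter_left_zigzagBlock hM)]
    exact .leafCount (hM.left_ne 0 n.zero_le) k
  right := by
    rw [← PrefixCount.filter_iff, filter_flatten_replicate (filter_right_zigzagBlock hM)]
    exact .leafCount (hM.right_ne 0 n.zero_le) k
  path i hi := by
    rw [← PrefixCount.filter_iff, filter_flatten_replicate (filter_path_zigzagBlock hM hi)]
    exact .pathCount (hM.path_ne (by omega)) k
  last := by
    rw [← PrefixCount.filter_iff, filter_flatten_replicate (filter_last_zigzagBlock hM)]
    exact .lastCount hM.last_ne k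

end ZigzagBlock

section Heaps

variable {B : Type*} {M : CoxeterMatrix B} {ω l : List B} {x y : B}

theorem heapLe.le {i j : Fin ω.length} (h : heapLe M ω i j) : i ≤ j := by
  induction h with
  | refl => exact le_rfl
  | tail _ h ih => exact ih.trans h.1.le

theorem heapLe.cons {i j : Fin ω.length} (h : heapLe M ω i j) :
    heapLe M (x :: ω) i.succ j.succ :=
  h.lift Fin.succ fun _ _ ⟨hlt, hne⟩ => ⟨Nat.succ_lt_succ hlt, hne⟩

theorem exists_head?_filter_eq_get {p : B → Bool} (j : Fin ω.length) (hj : p (ω.get j)) :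
    ∃ m ≤ j, p (ω.get m) ∧ (ω.filter p).head? = some (ω.get m) := by
  obtain ⟨z, hz⟩ := Option.isSome_iff_exists.1 (List.find?_isSome.2 ⟨_, ω.get_mem j, hj⟩)
  obtain ⟨hpz, m, hm, rfl, hlt⟩ := List.find?_eq_some_iff_getElem.1 hz
  refine ⟨⟨m, hm⟩, not_lt.1 fun hjm => ?_, hpz, by rw [List.head?_filter, hz]; rfl⟩
  simpa [show p ω[(j : ℕ)] from hj] using hlt j hjm

theorem heapLe_of_isChain_filter {p : B → Bool} (h : (ω.filter p).IsChain (M · · ≠ 2))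
    {i j : Fin ω.length} (hij : i ≤ j) (hi : p (ω.get i)) (hj : p (ω.get j)) :
    heapLe M ω i j := by
  induction ω with
  | nil => exact i.elim0
  | cons x ω ih =>
    have ih {i j : Fin ω.length} (hij : i ≤ j) :=
      ih (h.suffix ((List.suffix_cons x ω).filter p)) hij
    cases j using Fin.cases with
    | zero =>
      obtain rfl := Fin.le_zero_iff.1 hij
      exact .refl
    | succ j =>
      cases i using Fin.cases with
      | succ i => exact (ih (Fin.succ_le_succ_iff.1 hij) hi hj).cons
      | zero =>
        obtain ⟨m, hmj, hm, hhead⟩ := exists_head?_filter_eq_get j hj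
        rw [List.filter_cons_of_pos (a := x) hi] at h
        exact .head (b := m.succ) ⟨Nat.succ_pos m, h.rel_head? hhead⟩ (ih hmj hm hj).cons

theorem IsHeapAntichain.card_le_two {p : B → Bool} (hp : (ω.filter p).IsChain (M · · ≠ 2))
    (hp' : (ω.filter (!p ·)).IsChain (M · · ≠ 2)) {A : Finset (Fin ω.length)}
    (hA : IsHeapAntichain M ω A) : A.card ≤ 2 := by
  by_contra! hcard
  obtain ⟨i, hi, j, hj, hne, hij⟩ := Finset.exists_ne_map_eq_of_card_lt_of_maps_to
    (t := Finset.univ) (f := fun i => p (ω.get i)) (by simpa) fun _ _ => Finset.mem_univ _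
  wlog hlt : i < j generalizing i j
  · exact this j hj i hi hne.symm hij.symm (hne.lt_or_gt.resolve_left hlt)
  refine hA i hi j hj hne ?_
  cases h : p (ω.get i) with
  | true => exact heapLe_of_isChain_filter hp hlt.le h (hij ▸ h)
  | false =>
    exact heapLe_of_isChain_filter hp' hlt.le (by simpa using h) (by simpa using hij ▸ h)

theorem heapN_le_two_of_isChain_filter {p : B → Bool} (hp : (ω.filter p).IsChain (M · · ≠ 2))
    (hp' : (ω.filter (!p ·)).IsChain (M · · ≠ 2)) : heapN M ω ≤ 2 := by
  refine csSup_le' ?_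
  rintro _ ⟨A, hA, rfl⟩
  exact hA.card_le_two hp hp'

theorem card_le_heapN {A : Finset (Fin ω.length)} (hA : IsHeapAntichain M ω A) :
    A.card ≤ heapN M ω := by
  refine le_csSup ⟨Fintype.card (Fin ω.length), ?_⟩ ⟨A, hA, rfl⟩
  rintro _ ⟨A, -, rfl⟩
  exact A.card_le_univ

theorem not_heapLe_zero_one (h : M x y = 2) : ¬ heapLe M (x :: y :: l) 0 1 := by
  intro h01
  obtain h01 | ⟨j, ⟨hj, hne⟩, hj1⟩ := h01.cases_head
  · exact Fin.zero_ne_one h01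
  · obtain rfl : j = 1 := le_antisymm (heapLe.le hj1) (Nat.succ_le_of_lt hj)
    exact hne h

theorem two_le_heapN_cons_cons (h : M x y = 2) : 2 ≤ heapN M (x :: y :: l) := by
  have hA : IsHeapAntichain M (x :: y :: l) {0, 1} := by
    have h01 := not_heapLe_zero_one (l := l) h
    have h10 : ¬ heapLe M (x :: y :: l) 1 0 := fun h => absurd h.le (by simp)
    simp [IsHeapAntichain, h01, h10]
  simpa using card_le_heapN hA

end Heaps

section ZigzagHeap

variable {B : Type*} {M : CoxeterMatrix B} {n : ℕ} {a b : B} {v : ℕ → B}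

theorem isChain_zigzag (hM : IsAffineBDiagram M n a b v) :
    (a :: (List.range (n + 1) ++ (List.range n).reverse).map v).IsChain (M · · ≠ 2) := by
  have hstep (i : ℕ) (hi : i + 1 ≤ n) : M (v i) (v (i + 1)) ≠ 2 := by
    have := hM.path_step hi
    omega
  have hrange : ((List.range (n + 1)).map v).IsChain (M · · ≠ 2) := by
    rw [List.isChain_map, List.isChain_range]
    exact fun m hm => hstep m (by omega)
  have hreverse : ((List.range n).map v).reverse.IsChain (M · · ≠ 2) := by
    rw [List.isChain_reverse, List.isChain_map, List.isChain_range]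
    exact fun m hm => M.symmetric _ _ ▸ hstep m (by omega)
  rw [List.map_append, List.map_reverse, List.isChain_cons, List.isChain_append]
  refine ⟨?_, hrange, hreverse, ?_⟩
  · simp [List.range_succ_eq_map, hM.left_edge]
  · obtain ⟨m, rfl⟩ := Nat.exists_eq_add_of_le' hM.one_le
    simpa [List.range_succ] using M.symmetric _ _ ▸ hstep m le_rfl

theorem getLast?_zigzag (hn : 1 ≤ n) :
    (a :: (List.range (n + 1) ++ (List.range n).reverse).map v).getLast? = some (v 0) := by
  obtain ⟨m, rfl⟩ := Nat.exists_eq_add_of_le' hn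
  rw [List.range_succ_eq_map (n := m), List.reverse_cons, ← List.append_assoc, List.map_append,
    ← List.cons_append]
  exact List.getLast?_concat

theorem filter_ne_zigzagBlock [DecidableEq B] (hM : IsAffineBDiagram M n a b v) :
    (zigzagBlock n a b v).filter (· ≠ b) =
      a :: (List.range (n + 1) ++ (List.range n).reverse).map v := by
  rw [zigzagBlock, List.filter_cons_of_pos (by simpa using hM.ne),
    List.filter_cons_of_neg (by simp), List.filter_eq_self.2]
  simp only [List.mem_map]
  rintro _ ⟨m, hm, rfl⟩
  rw [List.mem_append, List.mem_reverse, List.mem_range, List.mem_range] at hm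
  simpa using (hM.right_ne m (by omega)).symm

theorem isChain_flatten_replicate {α : Type*} {R : α → α → Prop} {l : List α} (hl : l ≠ [])
    (h : l.IsChain R) (hlast : ∀ x ∈ l.getLast?, ∀ y ∈ l.head?, R x y) (k : ℕ) :
    (List.replicate k l).flatten.IsChain R := by
  rw [List.isChain_flatten fun hmem => hl (List.eq_of_mem_replicate hmem).symm]
  exact ⟨fun r hr => List.eq_of_mem_replicate hr ▸ h,
    List.isChain_replicate_of_rel k hlast⟩

theorem heapN_flatten_replicate_zigzagBlock (hM : IsAffineBDiagram M n a b v) {k : ℕ}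
    (hk : 1 ≤ k) : heapN M (List.replicate k (zigzagBlock n a b v)).flatten = 2 := by
  classical
  apply le_antisymm
  · refine heapN_le_two_of_isChain_filter (p := (· ≠ b)) ?_ ?_
    · rw [filter_flatten_replicate (filter_ne_zigzagBlock hM)]
      refine isChain_flatten_replicate (List.cons_ne_nil a _) (isChain_zigzag hM) ?_ k
      simp only [getLast?_zigzag hM.one_le, List.head?_cons, Option.mem_some_iff, forall_eq']
      simp [M.symmetric (v 0), hM.left_edge]
    · refine (List.pairwise_of_forall_mem_list fun x hx y hy => ?_).isChain
      obtain rfl : x = b := by simpa using List.of_mem_filter hx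
      obtain rfl : y = x := by simpa using List.of_mem_filter hy
      simp
  · obtain ⟨k, rfl⟩ := Nat.exists_eq_add_of_le' hk
    rw [List.replicate_succ, List.flatten_cons]
    exact two_le_heapN_cons_cons hM.leaves_comm

end ZigzagHeap

/-- in the affine `B`-type diagram (leaves `a, b` attached to `v 0`, path
`v 0 — v 1 — ⋯ — v n` with last edge of weight 4 and all other edges of weight 3), for
every `k ≥ 1` the word `w_k = (a b v₀ v₁ ⋯ v_{n-1} v_n v_{n-1} ⋯ v₁ v₀)^k` is a reduced
word of a fully commutative element and the maximal antichain size of its heap is 2. -/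
theorem stmt17 {B W : Type*} [Group W] {M : CoxeterMatrix B} (cs : CoxeterSystem M W)
    (n : ℕ) (hn : 1 ≤ n) (a b : B) (v : ℕ → B)
    (hvinj : Set.InjOn v (Set.Iic n)) (hab : a ≠ b)
    (hav : ∀ i ≤ n, a ≠ v i) (hbv : ∀ i ≤ n, b ≠ v i)
    (hMa : M a (v 0) = 3) (hMb : M b (v 0) = 3)
    (hMpath : ∀ i, i + 2 ≤ n → M (v i) (v (i + 1)) = 3)
    (hM4 : M (v (n - 1)) (v n) = 4)
    (hMab : M a b = 2)
    (hMa2 : ∀ i, 1 ≤ i → i ≤ n → M a (v i) = 2 ∧ M b (v i) = 2)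
    (hMfar : ∀ i j, i + 2 ≤ j → j ≤ n → M (v i) (v j) = 2)
    (k : ℕ) (hk : 1 ≤ k) :
    cs.IsReduced ((List.replicate k
        (a :: b :: (List.map v (List.range (n + 1)) ++
          List.map (fun i => v (n - 1 - i)) (List.range n)))).flatten) ∧
    FullyCommutative cs (cs.wordProd ((List.replicate k
        (a :: b :: (List.map v (List.range (n + 1)) ++
          List.map (fun i => v (n - 1 - i)) (List.range n)))).flatten)) ∧
    heapN M ((List.replicate k
        (a :: b :: (List.map v (List.range (n + 1)) ++
          List.map (fun i => v (n - 1 - i)) (List.range n)))).flatten) = 2 := by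
  have hM : IsAffineBDiagram M n a b v :=
    ⟨hn, hvinj, hab, hav, hbv, hMa, hMb, hMpath, hM4, hMab, fun i h₁ h₂ => (hMa2 i h₁ h₂).1,
      fun i h₁ h₂ => (hMa2 i h₁ h₂).2, hMfar⟩
  classical
  have havoid : IsBraidAvoiding M (List.replicate k (zigzagBlock n a b v)).flatten :=
    (isZigzagWord_flatten_replicate hM k).isBraidAvoiding hM
  rw [← zigzagBlock_eq]
  exact ⟨havoid.isReduced, havoid.fullyCommutative, heapN_flatten_replicate_zigzagBlock hM hk⟩
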